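/- Let Δ⁺ be the positive root system of a simple root system of type A, B, C, D, E, F, or G of rank n, and let α₁,...,α_k ∈ Δ⁺ be linearly dependent. Then there exist integers a₁,...,a_k, not all zero, with a₁α₁ + ··· + a_kα_k = 0 and a_i = ±1 for some index i. -/

import Mathlib

open Finset

/-!
A minimally supported relation scales to a primitive integral one, `∑ c i • α i = 0`, and Bézout
gives integers with `∑ c i * b i = 1`. Since the multiples of `c` are the only relations on its
support, there is a vector `y` with `B y (α i) = 1 / (N * c i) - b i` there, `N` being the size of
the support. Take a point `x` of the lattice spanned by the coroots that is closest to `y`: then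
`m i = B x (α i)` is an integer, because Cartan numbers are, and comparing `x` with its neighbours
`x ± α iᵛ` gives `|B y (α i) - m i| ≤ 1`. Hence `n i = m i + b i` is an integer at distance at most
`1` from `1 / (N * c i)`, so `c i * n i ≥ 0`. As `∑ c i * n i = 1`, some `c i * n i` is `1`, and
that `c i` is `±1`.
-/

section LinearRelations

variable {K V ι : Type*} [AddCommGroup V]

theorem exists_relation_of_minimal_support [DivisionRing K] [Module K V] {v : ι → V}
    (hv : ¬ LinearIndependent K v) :
    ∃ q : ι →₀ K, q ≠ 0 ∧ Finsupp.linearCombination K v q = 0 ∧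
      ∀ a ∈ Finsupp.supported K K (q.support : Set ι), Finsupp.linearCombination K v a = 0 →
        ∃ t : K, a = t • q := by
  obtain ⟨q, ⟨hvq, hq⟩, hmin⟩ := exists_minimalFor_of_wellFoundedLT
    (fun q : ι →₀ K ↦ Finsupp.linearCombination K v q = 0 ∧ q ≠ 0) Finsupp.support
    (by simpa [linearIndependent_iff] using hv)
  refine ⟨q, hq, hvq, fun a ha hva ↦ ?_⟩
  obtain ⟨i, hi⟩ := Finsupp.support_nonempty_iff.2 hq
  set t := a i / q i
  have hti : (a - t • q) i = 0 := by simp [t, Finsupp.mem_support_iff.1 hi]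
  have hsub : (a - t • q).support ⊆ q.support :=
    (Finsupp.mem_supported K _).1 <|
      sub_mem ha (Submodule.smul_mem _ t (Finsupp.mem_supported_support K q))
  refine ⟨t, sub_eq_zero.1 (by_contra fun hne ↦ ?_)⟩
  have hle : q.support ⊆ (a - t • q).support := hmin ⟨by simp [hva, hvq], hne⟩ hsub
  exact Finsupp.mem_support_iff.1 (hle hi) hti

theorem exists_gcd_eq_one_algebraMap_eq_mul (R : Type*) [CommRing R] [IsDomain R]
    [NormalizedGCDMonoid R] [Field K] [Algebra R K] [IsFractionRing R K] {s : Finset ι} {q : ι → K}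
    (hq : ∃ i ∈ s, q i ≠ 0) :
    ∃ c : ι → R, s.gcd c = 1 ∧ ∃ t : K, t ≠ 0 ∧ ∀ i ∈ s, algebraMap R K (c i) = t * q i := by
  obtain ⟨i₀, hi₀, hqi₀⟩ := hq
  obtain ⟨⟨d, hd⟩, hint⟩ := IsLocalization.exist_integer_multiples (nonZeroDivisors R) s q
  choose! b hb using hint
  simp only [Algebra.smul_def] at hb
  obtain ⟨c, hc, hgcd⟩ := s.extract_gcd b ⟨i₀, hi₀⟩
  have hgc : ∀ i ∈ s, algebraMap R K (s.gcd b) * algebraMap R K (c i) = algebraMap R K d * q i :=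
    fun i hi ↦ by rw [← map_mul, ← hc i hi, hb i hi]
  have hd0 : algebraMap R K d ≠ 0 := by simpa using nonZeroDivisors.ne_zero hd
  have hg0 : algebraMap R K (s.gcd b) ≠ 0 :=
    left_ne_zero_of_mul (hgc i₀ hi₀ ▸ mul_ne_zero hd0 hqi₀)
  refine ⟨c, hgcd, algebraMap R K d / algebraMap R K (s.gcd b), div_ne_zero hd0 hg0, fun i hi ↦ ?_⟩
  rw [div_mul_eq_mul_div, eq_div_iff hg0, mul_comm, hgc i hi]

theorem exists_dual_apply_eq_of_relations [Field K] [Module K V] {v : ι → V} {h : ι → K}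
    (hh : ∀ a, Finsupp.linearCombination K v a = 0 → Finsupp.linearCombination K h a = 0) :
    ∃ g : Module.Dual K V, ∀ i, g (v i) = h i := by
  have hmem : Finsupp.linearCombination K h ∈
      (LinearMap.ker (Finsupp.linearCombination K v)).dualAnnihilator :=
    (Submodule.mem_dualAnnihilator _).2 hh
  rw [← LinearMap.range_dualMap_eq_dualAnnihilator_ker] at hmem
  obtain ⟨g, hg⟩ := hmem
  exact ⟨g, fun i ↦ by simpa using LinearMap.congr_fun hg (Finsupp.single i 1)⟩

theorem exists_dual_apply_eq_of_supported_relations [Field K] [Module K V] {v : ι → V} {s : Set ι}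
    {h : ι → K} (hh : ∀ a ∈ Finsupp.supported K K s,
      Finsupp.linearCombination K v a = 0 → Finsupp.linearCombination K h a = 0) :
    ∃ g : Module.Dual K V, ∀ i ∈ s, g (v i) = h i := by
  classical
  have hsub : ∀ a : s →₀ K, Finsupp.linearCombination K (v ∘ (↑)) a = 0 →
      Finsupp.linearCombination K (h ∘ (↑)) a = 0 := fun a ha ↦ by
    rw [← Finsupp.linearCombination_mapDomain] at ha ⊢
    refine hh _ (fun j hj ↦ ?_) ha
    obtain ⟨i, -, rfl⟩ := Finset.mem_image.1 (Finsupp.mapDomain_support hj)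
    exact i.2
  obtain ⟨g, hg⟩ := exists_dual_apply_eq_of_relations hsub
  exact ⟨g, fun i hi ↦ hg ⟨i, hi⟩⟩

theorem exists_forall_mem_apply_eq_dual [Field K] [Module K V] {B : LinearMap.BilinForm K V}
    (hB : ∀ x, B x x = 0 → x = 0) (W : Submodule K V) [FiniteDimensional K W]
    (g : Module.Dual K V) : ∃ y, ∀ x ∈ W, B y x = g x := by
  have hBW : (B.restrict W).Nondegenerate :=
    ⟨fun x hx ↦ Subtype.ext (hB x (hx x)), fun x hx ↦ Subtype.ext (hB x (hx x))⟩
  exact ⟨((B.restrict W).toDual hBW).symm (g.domRestrict W), fun x hx ↦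
    LinearMap.BilinForm.apply_toDual_symm_apply (hB := hBW) (g.domRestrict W) ⟨x, hx⟩⟩

end LinearRelations

section Circuit

variable {R V ι : Type*} (K : Type*) [CommRing R] [NormalizedGCDMonoid R] [Field K] [Algebra R K]
  [AddCommGroup V] [Module R V] [Module K V]

/-- A primitive circuit of a family `v`, that is, a linear relation with coprime coefficients in `R`
such that every relation over `K` among the vectors of its support is one of its multiples. -/
structure IsPrimitiveCircuit (v : ι → V) (c : ι →₀ R) : Prop where
  gcd_eq_one : c.support.gcd c = 1
  linearCombination_eq_zero : Finsupp.linearCombination R v c = 0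
  exists_eq_mul : ∀ a ∈ Finsupp.supported K K (c.support : Set ι),
    Finsupp.linearCombination K v a = 0 → ∃ t : K, ∀ i, a i = t * algebraMap R K (c i)

variable {K}

theorem exists_isPrimitiveCircuit (R : Type*) [CommRing R] [IsDomain R] [NormalizedGCDMonoid R]
    [Algebra R K] [IsFractionRing R K] [Module R V] [IsScalarTower R K V] {v : ι → V}
    (hv : ¬ LinearIndependent K v) : ∃ c : ι →₀ R, IsPrimitiveCircuit K v c := by
  obtain ⟨q, hq, hvq, hmin⟩ := exists_relation_of_minimal_support hv
  obtain ⟨i₀, hi₀⟩ := Finsupp.support_nonempty_iff.2 hq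
  obtain ⟨c, hgcd, t, ht, hct⟩ :=
    exists_gcd_eq_one_algebraMap_eq_mul R ⟨i₀, hi₀, Finsupp.mem_support_iff.1 hi₀⟩
  let c' : ι →₀ R := Finsupp.indicator q.support fun i _ ↦ c i
  have hc'q : ∀ i, algebraMap R K (c' i) = t * q i := fun i ↦ by
    by_cases hi : i ∈ q.support
    · rw [Finsupp.indicator_of_mem hi, hct i hi]
    · rw [Finsupp.indicator_of_notMem hi, map_zero, Finsupp.notMem_support_iff.1 hi, mul_zero]
  have hsupp : c'.support = q.support := by
    ext i
    rw [Finsupp.mem_support_iff, Finsupp.mem_support_iff, ← (IsFractionRing.injective R K).ne_iff,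
      map_zero, hc'q, mul_ne_zero_iff, and_iff_right ht]
  refine ⟨c', ?_, ?_, ?_⟩
  · rw [hsupp, ← hgcd]
    exact Finset.gcd_congr rfl fun i hi ↦ Finsupp.indicator_of_mem hi _
  · rw [Finsupp.linearCombination_apply] at hvq ⊢
    rw [Finsupp.sum, hsupp, ← smul_zero t, ← hvq, Finsupp.sum, Finset.smul_sum]
    exact Finset.sum_congr rfl fun i _ ↦ by rw [← algebraMap_smul K, hc'q, mul_smul]
  · rw [hsupp]
    intro a ha hva
    obtain ⟨u, rfl⟩ := hmin a ha hva
    exact ⟨u / t, fun i ↦ by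
      rw [hc'q, ← mul_assoc, div_mul_cancel₀ u ht, Finsupp.smul_apply, smul_eq_mul]⟩

theorem IsPrimitiveCircuit.exists_forall_apply_eq {v : ι → V} {c : ι →₀ R}
    (hc : IsPrimitiveCircuit K v c) {B : LinearMap.BilinForm K V} (hB : ∀ x, B x x = 0 → x = 0)
    {h : ι → K} (hh : ∑ i ∈ c.support, algebraMap R K (c i) * h i = 0) :
    ∃ y, ∀ i ∈ c.support, B y (v i) = h i := by
  have hrel : ∀ a ∈ Finsupp.supported K K (c.support : Set ι),
      Finsupp.linearCombination K v a = 0 → Finsupp.linearCombination K h a = 0 := by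
    intro a ha hva
    obtain ⟨t, hat⟩ := hc.exists_eq_mul a ha hva
    rw [Finsupp.linearCombination_apply,
      Finsupp.sum_of_support_subset a ha _ (fun i _ ↦ zero_smul K (h i)), ← mul_zero t, ← hh,
      Finset.mul_sum]
    exact Finset.sum_congr rfl fun i _ ↦ by rw [hat, smul_eq_mul, mul_assoc]
  obtain ⟨g, hg⟩ := exists_dual_apply_eq_of_supported_relations hrel
  have := FiniteDimensional.span_of_finite K (c.support.finite_toSet.image v)
  obtain ⟨y, hy⟩ := exists_forall_mem_apply_eq_dual hB (Submodule.span K (v '' c.support)) g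
  exact ⟨y, fun i hi ↦ (hy _ (Submodule.subset_span (Set.mem_image_of_mem v hi))).trans (hg i hi)⟩

end Circuit

section Lattice

variable {V : Type*} [AddCommGroup V] [Module ℚ V] {B : LinearMap.BilinForm ℚ V}

theorem exists_closest_mem_of_fg (hB : B.IsNonneg) {Λ : Submodule ℤ V} (hΛ : Λ.FG) (y : V) :
    ∃ x ∈ Λ, ∀ x' ∈ Λ, B (y - x) (y - x) ≤ B (y - x') (y - x') := by
  let L := Λ ⊔ Submodule.span ℤ {y}
  have hL : L.FG := hΛ.sup (Submodule.fg_span_singleton y)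
  -- The values of `B` on `L` have a common denominator, so those of the squared distance to `y`
  -- are well ordered.
  obtain ⟨d, hd, hint⟩ := FractionalIdeal.isFractional_of_fg (S := nonZeroDivisors ℤ)
    (hL.map₂ (B.restrictScalars₁₂ ℤ ℤ) hL)
  have hdB : ∀ x ∈ Λ, ∃ m : ℕ, (m : ℚ) = |(d : ℚ)| * B (y - x) (y - x) := fun x hx ↦ by
    have hyx : y - x ∈ L := sub_mem (Submodule.mem_sup_right (Submodule.mem_span_singleton_self y))
      (Submodule.mem_sup_left hx)
    obtain ⟨m, hm⟩ := hint _ (Submodule.apply_mem_map₂ _ hyx hyx)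
    have hm' : (m : ℚ) = d * B (y - x) (y - x) := by simpa using hm
    refine ⟨m.natAbs, ?_⟩
    rw [Nat.cast_natAbs, Int.cast_abs, hm', abs_mul, abs_of_nonneg (hB.nonneg _)]
  choose! N hN using hdB
  obtain ⟨x, hx, hmin⟩ := exists_minimalFor_of_wellFoundedLT (· ∈ Λ) N ⟨0, zero_mem Λ⟩
  refine ⟨x, hx, fun x' hx' ↦ ?_⟩
  have hle : N x ≤ N x' := (le_total (N x) (N x')).elim id (hmin hx')
  have hd0 : (0 : ℚ) < |(d : ℚ)| := by simpa using nonZeroDivisors.ne_zero hd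
  rw [← mul_le_mul_iff_right₀ hd0, ← hN x hx, ← hN x' hx']
  exact_mod_cast hle

theorem exists_mem_forall_abs_two_mul_le (hB : B.IsPosSemidef) {Λ : Submodule ℤ V} (hΛ : Λ.FG)
    (y : V) : ∃ x ∈ Λ, ∀ w ∈ Λ, |2 * B (y - x) w| ≤ B w w := by
  obtain ⟨x, hx, hmin⟩ := exists_closest_mem_of_fg hB.isNonneg hΛ y
  have hle : ∀ w ∈ Λ, 2 * B (y - x) w ≤ B w w := fun w hw ↦ by
    have hmin_w := hmin (x + w) (add_mem hx hw)
    have hswap : B w (y - x) = B (y - x) w := hB.isSymm.eq w (y - x)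
    rw [← sub_sub, map_sub (B (y - x - w)), map_sub B (y - x), LinearMap.sub_apply,
      LinearMap.sub_apply] at hmin_w
    linarith
  refine ⟨x, hx, fun w hw ↦ abs_le.2 ⟨?_, hle w hw⟩⟩
  have hle_neg := hle (-w) (neg_mem hw)
  simp only [map_neg, LinearMap.neg_apply, neg_neg] at hle_neg
  linarith

end Lattice

section Coroot

variable {K V ι : Type*} [AddCommGroup V]

/-- The coroot `2 x / B(x, x)` of a vector `x`, identified with an element of `V` by means of the
form `B`; it is `0` if `B x x = 0`. -/
def corootVector [Field K] [Module K V] (B : LinearMap.BilinForm K V) (x : V) : V :=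
  (2 / B x x) • x

theorem apply_corootVector [Field K] [Module K V] (B : LinearMap.BilinForm K V) (y x : V) :
    B y (corootVector B x) = 2 * B y x / B x x := by
  rw [corootVector, map_smul, smul_eq_mul, div_mul_eq_mul_div]

theorem apply_corootVector_self [Field K] [Module K V] (B : LinearMap.BilinForm K V) (x : V) :
    B (corootVector B x) (corootVector B x) = 4 / B x x := by
  rw [apply_corootVector, corootVector, map_smul, LinearMap.smul_apply, smul_eq_mul]
  by_cases hx : B x x = 0
  · simp [hx]
  · field_simp
    norm_num

theorem exists_integral_pairing_abs_sub_le_one [Module ℚ V] {B : LinearMap.BilinForm ℚ V}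
    (hB : B.IsPosSemidef) {α : ι → V} {s : Finset ι} (hα : ∀ i ∈ s, 0 < B (α i) (α i))
    (hcrys : ∀ i ∈ s, ∀ j ∈ s, ∃ m : ℤ, 2 * B (α j) (α i) / B (α i) (α i) = m) (y : V) :
    ∃ x, ∀ i ∈ s, ∃ m : ℤ, B x (α i) = m ∧ |B y (α i) - m| ≤ 1 := by
  let Λ := Submodule.span ℤ ((fun i ↦ corootVector B (α i)) '' s)
  obtain ⟨x, hx, hxy⟩ := exists_mem_forall_abs_two_mul_le hB
    (Submodule.fg_span (s.finite_toSet.image fun i ↦ corootVector B (α i))) y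
  refine ⟨x, fun j hj ↦ ?_⟩
  have hint : Λ ≤ (1 : Submodule ℤ ℚ).comap ((B.flip (α j)).restrictScalars ℤ) := by
    refine Submodule.span_le.2 (Set.image_subset_iff.2 fun i hi ↦ ?_)
    obtain ⟨m, hm⟩ := hcrys i hi j hj
    have hpair : B (corootVector B (α i)) (α j) = m := by
      rw [← hm, ← apply_corootVector, hB.isSymm.eq]
    exact Submodule.mem_one.2 ⟨m, hpair.symm⟩
  obtain ⟨m, hm : (m : ℚ) = B x (α j)⟩ := Submodule.mem_one.1 (hint hx)
  refine ⟨m, hm.symm, ?_⟩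
  have hclose := hxy _ (Submodule.subset_span (Set.mem_image_of_mem _ hj))
  have hscale : 2 * B (y - x) (corootVector B (α j)) = 4 / B (α j) (α j) * (B y (α j) - m) := by
    rw [apply_corootVector, hm, map_sub, LinearMap.sub_apply]
    ring
  have hpos : 0 < 4 / B (α j) (α j) := div_pos four_pos (hα j hj)
  rw [hscale, apply_corootVector_self, abs_mul, abs_of_pos hpos] at hclose
  exact (mul_le_iff_le_one_right hpos).1 hclose

end Coroot

section UnitCoefficient

variable {K ι : Type*} [Field K]

theorem mul_nonneg_of_abs_div_sub_le_one [LinearOrder K] [IsStrictOrderedRing K] {ε : K}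
    (hε : 0 < ε) {c n : ℤ} (hc : c ≠ 0) (h : |ε / c - n| ≤ 1) : 0 ≤ c * n := by
  have hcK : (c : K) ≠ 0 := Int.cast_ne_zero.2 hc
  have hmul : |ε - c * n| ≤ |(c : K)| :=
    calc |ε - c * n| = |(c : K)| * |ε / c - n| := by rw [← abs_mul, mul_sub, mul_div_cancel₀ _ hcK]
      _ ≤ |(c : K)| := mul_le_of_le_one_right (abs_nonneg _) h
  have hlt : -|c| < c * n := by
    have hltK : -|(c : K)| < c * n := by linarith [(abs_le.1 hmul).2]
    exact_mod_cast hltK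
  by_contra! hneg
  have hn : 1 ≤ |n| := Int.one_le_abs (right_ne_zero_of_mul hneg.ne)
  have habs : |c| ≤ |c * n| := abs_mul c n ▸ le_mul_of_one_le_right (abs_nonneg c) hn
  rw [abs_of_neg hneg] at habs
  linarith

theorem exists_isUnit_of_sum_mul_eq_one {s : Finset ι} {c n : ι → ℤ}
    (hnonneg : ∀ i ∈ s, 0 ≤ c i * n i) (hsum : ∑ i ∈ s, c i * n i = 1) :
    ∃ i ∈ s, IsUnit (c i) := by
  obtain ⟨i, hi, hne⟩ := Finset.exists_ne_zero_of_sum_ne_zero (hsum.trans_ne one_ne_zero)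
  have hle : c i * n i ≤ 1 := hsum ▸ Finset.single_le_sum hnonneg hi
  exact ⟨i, hi, .of_mul_eq_one (n i) (hle.antisymm ((hnonneg i hi).lt_of_ne' hne))⟩

theorem sum_mul_inv_card_div_sub_eq_zero [CharZero K] {s : Finset ι} {c b : ι → K}
    (hc : ∀ i ∈ s, c i ≠ 0) (hcb : ∑ i ∈ s, c i * b i = 1) :
    ∑ i ∈ s, c i * ((#s : K)⁻¹ / c i - b i) = 0 := by
  have hs : (#s : K) ≠ 0 := by
    rw [Nat.cast_ne_zero, Finset.card_ne_zero]
    exact Finset.nonempty_of_sum_ne_zero (hcb.trans_ne one_ne_zero)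
  calc ∑ i ∈ s, c i * ((#s : K)⁻¹ / c i - b i) = ∑ i ∈ s, ((#s : K)⁻¹ - c i * b i) :=
        Finset.sum_congr rfl fun i hi ↦ by rw [mul_sub, mul_div_cancel₀ _ (hc i hi)]
    _ = 0 := by simp [hcb, hs]

end UnitCoefficient

section IntegralCartanNumbers

variable {V ι : Type*} [AddCommGroup V] [Module ℚ V] {B : LinearMap.BilinForm ℚ V} {α : ι → V}
  {c : ι →₀ ℤ}

theorem sum_mul_eq_zero_of_apply_eq (hc : Finsupp.linearCombination ℤ α c = 0) {x : V} {m : ι → ℤ}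
    (hm : ∀ i ∈ c.support, B x (α i) = m i) : ∑ i ∈ c.support, c i * m i = 0 := by
  have hsum : ∑ i ∈ c.support, (c i : ℚ) * m i = 0 :=
    calc ∑ i ∈ c.support, (c i : ℚ) * m i = ∑ i ∈ c.support, B x (c i • α i) :=
          Finset.sum_congr rfl fun i hi ↦ by rw [map_zsmul, hm i hi, zsmul_eq_mul]
      _ = B x (Finsupp.linearCombination ℤ α c) := (map_sum (B x) _ _).symm
      _ = 0 := by rw [hc, map_zero]
  exact_mod_cast hsum

theorem IsPrimitiveCircuit.exists_isUnit (hc : IsPrimitiveCircuit ℚ α c) (hsymm : B.IsSymm)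
    (hpos : ∀ x, x ≠ 0 → 0 < B x x) (hα : ∀ i ∈ c.support, α i ≠ 0)
    (hcrys : ∀ i ∈ c.support, ∀ j ∈ c.support,
      ∃ m : ℤ, 2 * B (α j) (α i) / B (α i) (α i) = m) :
    ∃ i ∈ c.support, IsUnit (c i) := by
  have hB : B.IsPosSemidef :=
    ⟨hsymm, ⟨fun x ↦ (eq_or_ne x 0).elim (fun h ↦ by simp [h]) fun h ↦ (hpos x h).le⟩⟩
  have hc0 : ∀ i ∈ c.support, c i ≠ 0 := fun i ↦ Finsupp.mem_support_iff.1
  obtain ⟨b, hb⟩ := c.support.gcd_eq_sum_mul c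
  rw [hc.gcd_eq_one] at hb
  have hbQ : ∑ i ∈ c.support, algebraMap ℤ ℚ (c i) * (b i : ℚ) = 1 := by
    simp only [eq_intCast]
    exact_mod_cast hb.symm
  obtain ⟨y, hy⟩ := hc.exists_forall_apply_eq (fun x ↦ not_imp_not.1 fun h ↦ (hpos x h).ne')
    (sum_mul_inv_card_div_sub_eq_zero (fun i hi ↦ Int.cast_ne_zero.2 (hc0 i hi)) hbQ)
  obtain ⟨x, hx⟩ :=
    exists_integral_pairing_abs_sub_le_one hB (fun i hi ↦ hpos _ (hα i hi)) hcrys y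
  choose! m hm hym using hx
  refine exists_isUnit_of_sum_mul_eq_one (n := m + b) (fun i hi ↦ ?_) ?_
  · have hcard : (0 : ℚ) < (#c.support : ℚ)⁻¹ :=
      inv_pos.2 (Nat.cast_pos.2 (Finset.card_pos.2 ⟨i, hi⟩))
    refine mul_nonneg_of_abs_div_sub_le_one hcard (hc0 i hi) ?_
    have hdist := hym i hi
    rwa [hy i hi, sub_sub, add_comm, ← Int.cast_add] at hdist
  · simp only [Pi.add_apply, mul_add, Finset.sum_add_distrib,
      sum_mul_eq_zero_of_apply_eq hc.linearCombination_eq_zero hm, ← hb, zero_add]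

theorem exists_relation_with_unit_coefficient_general (hsymm : B.IsSymm)
    (hpos : ∀ x, x ≠ 0 → 0 < B x x) (hα : ∀ i, α i ≠ 0)
    (hcrys : ∀ i j, ∃ m : ℤ, 2 * B (α j) (α i) / B (α i) (α i) = m)
    (hdep : ¬ LinearIndependent ℚ α) :
    ∃ c : ι →₀ ℤ, Finsupp.linearCombination ℤ α c = 0 ∧ ∃ i, IsUnit (c i) := by
  obtain ⟨c, hc⟩ := exists_isPrimitiveCircuit ℤ hdep
  obtain ⟨i, -, hi⟩ := hc.exists_isUnit hsymm hpos (fun i _ ↦ hα i) fun i _ j _ ↦ hcrys i j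
  exact ⟨c, hc.linearCombination_eq_zero, i, hi⟩

end IntegralCartanNumbers

/-- Lemma (leCanChooseCoeffOne): let `Δ` be a simple (i.e. irreducible,
reduced, crystallographic) root system of rank `n` -- equivalently, a root
system of one of the types A, B, C, D, E, F, G -- realized in `ℚⁿ` with respect
to a positive definite symmetric bilinear form `B`, and let `Δ⁺` be the
positive system cut out by a linear functional `f` not vanishing on any root.
If `α₁, ..., α_k ∈ Δ⁺` are linearly dependent, then there is an integral linear
relation among them in which some coefficient is `+1` or `-1`. -/
theorem exists_relation_with_unit_coefficient
    (n : ℕ) (B : (Fin n → ℚ) →ₗ[ℚ] (Fin n → ℚ) →ₗ[ℚ] ℚ)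
    (hBsymm : ∀ x y, B x y = B y x)
    (hBpos : ∀ x : Fin n → ℚ, x ≠ 0 → 0 < B x x)
    (Δ : Set (Fin n → ℚ)) (hfin : Δ.Finite) (h0 : (0 : Fin n → ℚ) ∉ Δ)
    (hspan : Submodule.span ℚ Δ = ⊤)
    (hneg : ∀ α ∈ Δ, -α ∈ Δ)
    (hreduced : ∀ α ∈ Δ, ∀ c : ℚ, c • α ∈ Δ → c = 1 ∨ c = -1)
    (hrefl : ∀ α ∈ Δ, ∀ β ∈ Δ, β - (2 * B β α / B α α) • α ∈ Δ)
    (hcrys : ∀ α ∈ Δ, ∀ β ∈ Δ, ∃ z : ℤ, 2 * B β α / B α α = (z : ℚ))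
    (hirr : ∀ S T : Set (Fin n → ℚ), S ∪ T = Δ → S.Nonempty → T.Nonempty →
      (∀ a ∈ S, ∀ b ∈ T, B a b = 0) → False)
    (f : (Fin n → ℚ) →ₗ[ℚ] ℚ) (hf : ∀ α ∈ Δ, f α ≠ 0)
    (k : ℕ) (α : Fin k → (Fin n → ℚ))
    (hα : ∀ i, α i ∈ Δ ∧ 0 < f (α i))
    (hdep : ¬ LinearIndependent ℚ α) :
    ∃ a : Fin k → ℤ, (∃ i, a i ≠ 0) ∧ (∑ i, (a i : ℚ) • α i) = 0 ∧
      ∃ i, a i = 1 ∨ a i = -1 := by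
  obtain ⟨c, hc, i, hi⟩ := exists_relation_with_unit_coefficient_general ⟨hBsymm⟩ hBpos
    (fun i h ↦ h0 (h ▸ (hα i).1)) (fun i j ↦ hcrys _ (hα i).1 _ (hα j).1) hdep
  have hsum : ∑ i, (c i : ℚ) • α i = 0 := by
    rw [Finsupp.linearCombination_apply, Finsupp.sum_fintype _ _ fun j ↦ zero_smul ℤ (α j)] at hc
    simpa only [Int.cast_smul_eq_zsmul] using hc
  exact ⟨c, ⟨i, hi.ne_zero⟩, hsum, i, Int.isUnit_iff.1 hi⟩
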